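/- Let d ≥ 1, n = 2^d, B : [n] → {−1,+1}^d a bijection, α ∈ [0, 1/2], τ ∈ (0,1), X a measurable space, and D a probability measure on X × [n]. Then for every measurable f : X → R^d, er^{ℓ^α}_D[pred^BEP_τ ∘ f] − er^{ℓ^α,*}_D ≤ ( er^{ψ^{BEP,α}}_D[f] − er^{ψ^{BEP,α},*}_D ) / ( 2 min(τ, 1−τ) ). -/

import Mathlib

open scoped BigOperators
open MeasureTheory

/-- The abstain(α) loss: `ℓ^α(y,t) = 0` if `t = y`, `α` if `t = n+1`, and `1` otherwise. -/
noncomputable def abstainLoss (n : ℕ) (α : ℝ) (y : Fin n) (t : Fin (n + 1)) : ℝ :=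
  if t = Fin.last n then α else if (t : ℕ) = (y : ℕ) then 0 else 1

/-- Generalized BEP surrogate. `B : Fin (2^d) ≃ (Fin d → Bool)` encodes a bijection
`[n] → {−1,+1}^d`, where `true ↦ +1` and `false ↦ −1`:
`ψ^{BEP,α}(y,u) = 2·max( α·max_j γ(B_j(y)u_j), (1−α)·max_j γ(B_j(y)u_j) ) + 2α`,
where `γ(a) = max(a,−1)`. -/
noncomputable def psiBEPa (d : ℕ) (B : Fin (2 ^ d) ≃ (Fin d → Bool)) (α : ℝ)
    (y : Fin (2 ^ d)) (u : Fin d → ℝ) : ℝ :=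
  2 * max (α * ⨆ j, max ((if B y j then (1 : ℝ) else -1) * u j) (-1))
      ((1 - α) * ⨆ j, max ((if B y j then (1 : ℝ) else -1) * u j) (-1)) + 2 * α

/-- The coordinatewise sign vector of `−u`, where `sign(a) = +1` (`true`) if `a ≥ 0`
and `−1` (`false`) if `a < 0`; so `sign(−u)_j = +1` iff `u j ≤ 0`. -/
noncomputable def signNeg (d : ℕ) (u : Fin d → ℝ) : Fin d → Bool :=
  fun j => decide (u j ≤ 0)

/-- `pred^BEP_τ(u)`: `n+1` if `min_j |u_j| ≤ τ`, and `B⁻¹(sign(−u))` otherwise. -/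
noncomputable def predBEP (d : ℕ) (B : Fin (2 ^ d) ≃ (Fin d → Bool)) (τ : ℝ)
    (u : Fin d → ℝ) : Fin (2 ^ d + 1) :=
  if (⨅ j, |u j|) ≤ τ then Fin.last (2 ^ d)
  else Fin.castSucc (B.symm (signNeg d u))

/-!
Let `q = min (min_j |u_j|) 1`, and let the sign decoding be `B⁻¹(sign(−u))`. The surrogate at `u`
dominates twice the expected abstain loss of the randomized prediction that plays the sign decoding
with probability `q` and abstains otherwise. Since `pred_τ` plays the sign decoding only if `q ≥ τ`
and abstains only if `1 − q ≥ 1 − τ`, it takes up a share `min τ (1 − τ)` of this randomization;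
what is left is still a randomized predictor, so it is no better than the optimal deterministic one.
Hence `er^ψ[f] ≥ c · er^ℓ[pred_τ ∘ f] + (2 − c) · er^{ℓ,*}` with `c = 2 min τ (1 − τ)`. Conversely
`er^{ψ,*} ≤ 2 · er^{ℓ,*}`, because the surrogate is at most twice the abstain loss at the scores
`−B(y)` and `0`. Subtracting the two inequalities gives the bound.
-/

section Risk

open Function Set
open scoped ENNReal

variable {X Y T U : Type*} [MeasurableSpace X] [MeasurableSpace Y]

/-- The risk `er^ℓ_D[h] = E_{(X,Y)∼D}[ℓ(Y, h(X))]`, as an extended nonnegative number; negative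
values of `ℓ` are truncated to `0`. -/
noncomputable def risk (D : Measure (X × Y)) (ℓ : Y → T → ℝ) (h : X → T) : ℝ≥0∞ :=
  ∫⁻ z, ENNReal.ofReal (ℓ z.2 (h z.1)) ∂D

/-- The optimal risk `er^{ℓ,*}_D`, the infimum of the risk over measurable predictors. -/
noncomputable def optimalRisk [MeasurableSpace T] (D : Measure (X × Y)) (ℓ : Y → T → ℝ) : ℝ≥0∞ :=
  ⨅ h : {h : X → T // Measurable h}, risk D ℓ h.1

variable [MeasurableSpace T] {D : Measure (X × Y)} {ℓ : Y → T → ℝ}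

lemma optimalRisk_le_risk {h : X → T} (hh : Measurable h) : optimalRisk D ℓ ≤ risk D ℓ h :=
  iInf_le (fun h : {h : X → T // Measurable h} => risk D ℓ h.1) ⟨h, hh⟩

lemma optimalRisk_le_mul_optimalRisk [MeasurableSpace U] {ψ : Y → U → ℝ} {b : ℝ} (hb : 0 < b)
    {φ : T → U} (hφ : Measurable φ) (h : ∀ y t, ψ y (φ t) ≤ b * ℓ y t) :
    optimalRisk D ψ ≤ ENNReal.ofReal b * optimalRisk D ℓ := by
  rw [optimalRisk.eq_def D ℓ, ENNReal.mul_iInf_of_ne (by simpa using hb) ENNReal.ofReal_ne_top]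
  refine le_iInf fun g => (optimalRisk_le_risk (hφ.comp g.2)).trans ?_
  rw [risk, risk, ← lintegral_const_mul' _ _ ENNReal.ofReal_ne_top]
  refine lintegral_mono fun z => ?_
  rw [← ENNReal.ofReal_mul hb.le]
  exact ENNReal.ofReal_le_ofReal (h _ _)

lemma setLIntegral_Ico_ite_lt {w e : ℝ} (hw : w ∈ Icc 0 e) (a b : ℝ≥0∞) :
    ∫⁻ s in Ico 0 e, (if s < w then a else b) =
      ENNReal.ofReal w * a + ENNReal.ofReal (e - w) * b := by
  rw [← Ico_union_Ico_eq_Ico hw.1 hw.2, lintegral_union measurableSet_Ico Ico_disjoint_Ico_same,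
    setLIntegral_congr_fun (g := fun _ => a) measurableSet_Ico fun s hs => if_pos hs.2,
    setLIntegral_congr_fun (g := fun _ => b) measurableSet_Ico fun s hs => if_neg hs.1.not_gt]
  simp [mul_comm]

-- The mixture is the average over `s ∈ [0, e)` of the deterministic predictors that play `k x` if
-- `s < w x` and `k' x` otherwise.
lemma mul_optimalRisk_le_lintegral_mixture [SFinite D] (hℓ0 : ∀ y t, 0 ≤ ℓ y t)
    (hℓ : Measurable (uncurry ℓ)) {e : ℝ} {w : X → ℝ} (hw : Measurable w)
    (hwe : ∀ x, w x ∈ Icc 0 e) {k k' : X → T} (hk : Measurable k) (hk' : Measurable k') :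
    ENNReal.ofReal e * optimalRisk D ℓ ≤
      ∫⁻ z, ENNReal.ofReal (w z.1 * ℓ z.2 (k z.1) + (e - w z.1) * ℓ z.2 (k' z.1)) ∂D := by
  have hthreshold : Measurable fun p : ℝ × X => if p.1 < w p.2 then k p.2 else k' p.2 :=
    .ite (measurableSet_lt (by fun_prop) (by fun_prop)) (by fun_prop) (by fun_prop)
  calc ENNReal.ofReal e * optimalRisk D ℓ
    _ = ∫⁻ _ in Ico (0 : ℝ) e, optimalRisk D ℓ := by simp [mul_comm]
    _ ≤ ∫⁻ s in Ico (0 : ℝ) e, risk D ℓ fun x => if s < w x then k x else k' x :=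
        lintegral_mono fun s => optimalRisk_le_risk (hthreshold.comp measurable_prodMk_left)
    _ = ∫⁻ z, (∫⁻ s in Ico (0 : ℝ) e,
          ENNReal.ofReal (ℓ z.2 (if s < w z.1 then k z.1 else k' z.1))) ∂D :=
        lintegral_lintegral_swap (hℓ.comp ((measurable_snd.comp measurable_snd).prodMk
          (hthreshold.comp (measurable_fst.prodMk
            (measurable_fst.comp measurable_snd))))).ennreal_ofReal.aemeasurable
    _ = _ := lintegral_congr fun z => by
        obtain ⟨hw0, hw1⟩ := hwe z.1
        have hw1' := sub_nonneg.2 hw1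
        simp only [apply_ite]
        rw [setLIntegral_Ico_ite_lt ⟨hw0, hw1⟩, ← ENNReal.ofReal_mul hw0,
          ← ENNReal.ofReal_mul hw1', ← ENNReal.ofReal_add (mul_nonneg hw0 (hℓ0 _ _))
            (mul_nonneg hw1' (hℓ0 _ _))]

lemma mul_risk_add_mul_optimalRisk_le_risk [SFinite D] {ψ : Y → U → ℝ}
    (hℓ0 : ∀ y t, 0 ≤ ℓ y t) (hℓ : Measurable (uncurry ℓ)) {c e : ℝ} (hc : 0 ≤ c) {w : X → ℝ}
    (hw : Measurable w) (hwe : ∀ x, w x ∈ Icc 0 e) {g k k' : X → T} (hg : Measurable g)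
    (hk : Measurable k) (hk' : Measurable k') {f : X → U}
    (h : ∀ x y, c * ℓ y (g x) + (w x * ℓ y (k x) + (e - w x) * ℓ y (k' x)) ≤ ψ y (f x)) :
    ENNReal.ofReal c * risk D ℓ g + ENNReal.ofReal e * optimalRisk D ℓ ≤ risk D ψ f := by
  have hℓg : Measurable fun z : X × Y => ENNReal.ofReal (ℓ z.2 (g z.1)) :=
    (hℓ.comp (measurable_snd.prodMk (hg.comp measurable_fst))).ennreal_ofReal
  grw [mul_optimalRisk_le_lintegral_mixture hℓ0 hℓ hw hwe hk hk']
  rw [risk, ← lintegral_const_mul _ hℓg, ← lintegral_add_left (hℓg.const_mul _)]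
  refine lintegral_mono fun z => ?_
  have hmix : 0 ≤ w z.1 * ℓ z.2 (k z.1) + (e - w z.1) * ℓ z.2 (k' z.1) :=
    add_nonneg (mul_nonneg (hwe _).1 (hℓ0 _ _)) (mul_nonneg (sub_nonneg.2 (hwe _).2) (hℓ0 _ _))
  rw [← ENNReal.ofReal_mul hc, ← ENNReal.ofReal_add (mul_nonneg hc (hℓ0 _ _)) hmix]
  exact ENNReal.ofReal_le_ofReal (h _ _)

lemma tsub_le_tsub_div_of_mul_add_mul_le {c e a a' s s' : ℝ≥0∞} (hc0 : c ≠ 0) (hc : c ≠ ∞)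
    (he : e ≠ ∞) (hs : c * a + e * a' ≤ s) (hs' : s' ≤ (c + e) * a') :
    a - a' ≤ (s - s') / c := by
  obtain haa' | haa' := le_total a a'
  · simp [tsub_eq_zero_of_le haa']
  obtain rfl | ha' := eq_or_ne a' ∞
  · simp
  have hs'_top : s' ≠ ∞ :=
    ne_top_of_le_ne_top (ENNReal.mul_ne_top (ENNReal.add_ne_top.2 ⟨hc, he⟩) ha') hs'
  rw [ENNReal.le_div_iff_mul_le (.inl hc0) (.inl hc)]
  refine ENNReal.le_sub_of_add_le_right hs'_top ?_
  calc (a - a') * c + s' ≤ (a - a') * c + (c + e) * a' := by gcongr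
    _ = c * (a - a' + a') + e * a' := by ring
    _ = c * a + e * a' := by rw [tsub_add_cancel_of_le haa']
    _ ≤ s := hs

end Risk

section AbstainLoss

variable {n : ℕ} {α : ℝ}

lemma abstainLoss_last (y : Fin n) : abstainLoss n α y (Fin.last n) = α :=
  if_pos rfl

lemma abstainLoss_castSucc (y t : Fin n) :
    abstainLoss n α y t.castSucc = if t = y then 0 else 1 := by
  rw [abstainLoss, if_neg (Fin.castSucc_ne_last t)]
  simp [Fin.ext_iff]

lemma abstainLoss_nonneg (hα : 0 ≤ α) (y : Fin n) (t : Fin (n + 1)) :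
    0 ≤ abstainLoss n α y t := by
  unfold abstainLoss
  split_ifs <;> simp [hα]

end AbstainLoss

section Margin

variable {ι : Type*}

/-- The margin `min_j |u_j|` of a score vector, clipped at `1`: the probability with which the
randomized prediction dominated by the surrogate plays the sign decoding of `u`. -/
noncomputable def clippedMargin (u : ι → ℝ) : ℝ :=
  min (⨅ j, |u j|) 1

lemma clippedMargin_nonneg (u : ι → ℝ) : 0 ≤ clippedMargin u :=
  le_min (Real.iInf_nonneg fun _ => abs_nonneg _) zero_le_one

/-- Twice the probability `clippedMargin u` of the sign decoding, minus the share
`2 * min τ (1 - τ)` of it that `predBEP` at threshold `τ` takes up when it does not abstain. -/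
noncomputable def residualWeight (τ : ℝ) (u : ι → ℝ) : ℝ :=
  2 * clippedMargin u - if ⨅ j, |u j| ≤ τ then 0 else 2 * min τ (1 - τ)

lemma residualWeight_mem_Icc {τ : ℝ} (hτ : τ ≤ 1) (u : ι → ℝ) :
    residualWeight τ u ∈ Set.Icc 0 (2 - 2 * min τ (1 - τ)) := by
  have hτ_left : min τ (1 - τ) ≤ τ := min_le_left _ _
  have hτ_right : min τ (1 - τ) ≤ 1 - τ := min_le_right _ _
  unfold residualWeight
  split_ifs with h
  · have hle : clippedMargin u ≤ τ := (min_le_left _ _).trans h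
    constructor <;> linarith [clippedMargin_nonneg u]
  · have hge : τ ≤ clippedMargin u := le_min (not_le.1 h).le hτ
    have hle : clippedMargin u ≤ 1 := min_le_right _ _
    constructor <;> linarith

lemma measurable_iInf_abs [Countable ι] : Measurable fun u : ι → ℝ => ⨅ j, |u j| :=
  .iInf fun j => (measurable_pi_apply j).abs

lemma measurable_residualWeight [Countable ι] (τ : ℝ) :
    Measurable (residualWeight (ι := ι) τ) :=
  ((measurable_iInf_abs.min measurable_const).const_mul 2).sub
    (.ite (measurableSet_le measurable_iInf_abs measurable_const) measurable_const measurable_const)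

end Margin

section MaxHinge

/-- The real number `±1` encoded by a Boolean, with `true ↦ +1` as in `psiBEPa`. -/
def signReal (b : Bool) : ℝ := if b then 1 else -1

lemma abs_signReal (b : Bool) : |signReal b| = 1 := by
  cases b <;> simp [signReal]

lemma signReal_mul_self (b : Bool) : signReal b * signReal b = 1 := by
  cases b <;> simp [signReal]

variable {ι : Type*}

/-- The maximal hinge value `max_j γ(b_j u_j)`, where `γ(a) = max(a, −1)`, of the score vector `u`
against the sign vector encoded by `b`; it is `0` if there are no coordinates. -/
noncomputable def maxHinge (b : ι → Bool) (u : ι → ℝ) : ℝ :=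
  ⨆ j, max (signReal (b j) * u j) (-1)

lemma maxHinge_zero [Nonempty ι] (b : ι → Bool) : maxHinge b 0 = 0 := by
  simp [maxHinge]

lemma maxHinge_neg_signReal [Nonempty ι] (b : ι → Bool) :
    maxHinge b (fun j => -signReal (b j)) = -1 := by
  simp [maxHinge, signReal_mul_self]

lemma signReal_mul_le_abs (b : Bool) (a : ℝ) : signReal b * a ≤ |a| := by
  simpa [abs_mul, abs_signReal] using le_abs_self (signReal b * a)

lemma neg_abs_le_signReal_mul (b : Bool) (a : ℝ) : -|a| ≤ signReal b * a := by
  simpa [abs_mul, abs_signReal] using neg_abs_le (signReal b * a)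

lemma maxHinge_le_one {u : ι → ℝ} (hu : ∀ j, |u j| ≤ 1) (b : ι → Bool) : maxHinge b u ≤ 1 :=
  Real.iSup_le (fun j => max_le ((signReal_mul_le_abs _ _).trans (hu j)) (by norm_num)) zero_le_one

lemma signReal_mul_eq_abs {b : Bool} {a : ℝ} (h : b ≠ decide (a ≤ 0)) : signReal b * a = |a| := by
  by_cases ha : a ≤ 0
  · have hb : b = false := by simpa [ha] using h
    simp [hb, signReal, abs_of_nonpos ha]
  · have hb : b = true := by simpa [ha] using h
    simp [hb, signReal, abs_of_pos (not_le.1 ha)]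

variable [Finite ι]

lemma le_maxHinge (b : ι → Bool) (u : ι → ℝ) (j : ι) :
    max (signReal (b j) * u j) (-1) ≤ maxHinge b u :=
  le_ciSup (f := fun j => max (signReal (b j) * u j) (-1)) (Set.finite_range _).bddAbove j

lemma neg_clippedMargin_le_maxHinge [Nonempty ι] (b : ι → Bool) (u : ι → ℝ) :
    -clippedMargin u ≤ maxHinge b u := by
  obtain ⟨j, hj⟩ := exists_eq_ciInf_of_finite (f := fun j => |u j|)
  calc -clippedMargin u = max (-|u j|) (-1) := by rw [clippedMargin, ← hj, max_neg_neg]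
    _ ≤ max (signReal (b j) * u j) (-1) := max_le_max_right _ (neg_abs_le_signReal_mul _ _)
    _ ≤ maxHinge b u := le_maxHinge b u j

lemma clippedMargin_le_maxHinge {b : ι → Bool} {u : ι → ℝ} {j : ι}
    (hj : b j ≠ decide (u j ≤ 0)) : clippedMargin u ≤ maxHinge b u :=
  calc clippedMargin u ≤ ⨅ j, |u j| := min_le_left _ _
    _ ≤ |u j| := ciInf_le (Set.finite_range _).bddBelow j
    _ = signReal (b j) * u j := (signReal_mul_eq_abs hj).symm
    _ ≤ maxHinge b u := (le_max_left _ _).trans (le_maxHinge b u j)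

end MaxHinge

section BEP

variable {d : ℕ} (B : Fin (2 ^ d) ≃ (Fin d → Bool)) {α τ : ℝ}

lemma psiBEPa_eq_maxHinge (y : Fin (2 ^ d)) (u : Fin d → ℝ) :
    psiBEPa d B α y u = 2 * max (α * maxHinge (B y) u) ((1 - α) * maxHinge (B y) u) + 2 * α :=
  rfl

/-- The label `B⁻¹(sign(−u))` predicted at the score `u` when the predictor does not abstain. -/
noncomputable def signDecoding (u : Fin d → ℝ) : Fin (2 ^ d) :=
  B.symm (signNeg d u)

lemma exists_ne_decide_of_ne_signDecoding {y : Fin (2 ^ d)} {u : Fin d → ℝ}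
    (hy : signDecoding B u ≠ y) : ∃ j, B y j ≠ decide (u j ≤ 0) := by
  contrapose! hy
  rw [signDecoding, ← B.symm_apply_apply y]
  exact congrArg B.symm (funext fun j => (hy j).symm)

lemma two_mul_mixture_le_psiBEPa [NeZero d] (hα0 : 0 ≤ α) (hα1 : α ≤ 1) (y : Fin (2 ^ d))
    (u : Fin d → ℝ) :
    2 * (clippedMargin u * abstainLoss (2 ^ d) α y (signDecoding B u).castSucc +
      (1 - clippedMargin u) * α) ≤ psiBEPa d B α y u := by
  rw [psiBEPa_eq_maxHinge, abstainLoss_castSucc]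
  split_ifs with hy
  · have hcorrect : α * -clippedMargin u ≤ α * maxHinge (B y) u := by
      grw [neg_clippedMargin_le_maxHinge (B y) u]
    linarith [le_max_left (α * maxHinge (B y) u) ((1 - α) * maxHinge (B y) u)]
  · obtain ⟨j, hj⟩ := exists_ne_decide_of_ne_signDecoding B hy
    have hwrong : (1 - α) * clippedMargin u ≤ (1 - α) * maxHinge (B y) u :=
      mul_le_mul_of_nonneg_left (clippedMargin_le_maxHinge hj) (sub_nonneg.2 hα1)
    linarith [le_max_right (α * maxHinge (B y) u) ((1 - α) * maxHinge (B y) u)]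

/-- The embedding of predictions into scores under which the surrogate is at most twice the abstain
loss: a label `k` goes to `−B(k)`, abstention to `0`. -/
noncomputable def scoreBEP : Fin (2 ^ d + 1) → Fin d → ℝ :=
  Fin.lastCases 0 fun k j => -signReal (B k j)

lemma psiBEPa_scoreBEP_le [NeZero d] (hα0 : 0 ≤ α) (hα1 : α ≤ 1 / 2) (y : Fin (2 ^ d))
    (t : Fin (2 ^ d + 1)) :
    psiBEPa d B α y (scoreBEP B t) ≤ 2 * abstainLoss (2 ^ d) α y t := by
  rw [psiBEPa_eq_maxHinge]
  induction t using Fin.lastCases with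
  | last => simp [scoreBEP, maxHinge_zero, abstainLoss_last]
  | cast k =>
    rw [scoreBEP, Fin.lastCases_castSucc, abstainLoss_castSucc]
    split_ifs with hk
    · rw [hk, maxHinge_neg_signReal, max_eq_left (by linarith)]
      linarith
    · have hm : maxHinge (B y) (fun j => -signReal (B k j)) ≤ 1 :=
        maxHinge_le_one (fun j => by rw [abs_neg, abs_signReal]) _
      have hmax : max (α * maxHinge (B y) (fun j => -signReal (B k j)))
          ((1 - α) * maxHinge (B y) (fun j => -signReal (B k j))) ≤ 1 - α :=
        max_le (by nlinarith) (by nlinarith)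
      linarith

lemma share_add_residual_le_psiBEPa [NeZero d] (hα0 : 0 ≤ α) (hα1 : α ≤ 1) (y : Fin (2 ^ d))
    (u : Fin d → ℝ) :
    2 * min τ (1 - τ) * abstainLoss (2 ^ d) α y (predBEP d B τ u) +
      (residualWeight τ u * abstainLoss (2 ^ d) α y (signDecoding B u).castSucc +
        (2 - 2 * min τ (1 - τ) - residualWeight τ u) *
          abstainLoss (2 ^ d) α y (Fin.last (2 ^ d))) ≤
      psiBEPa d B α y u := by
  refine (le_of_eq ?_).trans (two_mul_mixture_le_psiBEPa B hα0 hα1 y u)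
  unfold predBEP residualWeight signDecoding
  split_ifs <;> rw [abstainLoss_last] <;> ring

lemma measurable_signNeg : Measurable (signNeg d) :=
  measurable_pi_lambda _ fun j => measurable_to_bool <| by
    simpa [Set.preimage, signNeg] using measurableSet_le (measurable_pi_apply j) measurable_const

lemma measurable_castSucc_signDecoding :
    Measurable fun u : Fin d → ℝ => (signDecoding B u).castSucc :=
  (Measurable.of_discrete (f := fun b => (B.symm b).castSucc)).comp measurable_signNeg

lemma measurable_predBEP : Measurable (predBEP d B τ) :=
  .ite (measurableSet_le measurable_iInf_abs measurable_const) measurable_const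
    (measurable_castSucc_signDecoding B)

end BEP

-- If `D` is infinite, the risks may be infinite too; the subtraction then has `∞ - ∞ = 0`.
theorem psiBEPa_excess_risk_bound_general {d : ℕ} (hd : 1 ≤ d)
    (B : Fin (2 ^ d) ≃ (Fin d → Bool)) {α : ℝ} (hα0 : 0 ≤ α) (hα1 : α ≤ 1 / 2)
    {τ : ℝ} (hτ0 : 0 < τ) (hτ1 : τ < 1) {X : Type*} [MeasurableSpace X]
    (D : Measure (X × Fin (2 ^ d))) [SFinite D] {f : X → Fin d → ℝ} (hf : Measurable f) :
    risk D (abstainLoss (2 ^ d) α) (fun x => predBEP d B τ (f x)) -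
        optimalRisk D (abstainLoss (2 ^ d) α) ≤
      (risk D (psiBEPa d B α) f - optimalRisk D (psiBEPa d B α)) /
        ENNReal.ofReal (2 * min τ (1 - τ)) := by
  have : NeZero d := ⟨by lia⟩
  set c := 2 * min τ (1 - τ) with hc_def
  have hc : 0 < c := mul_pos two_pos (lt_min hτ0 (sub_pos.2 hτ1))
  have hc2 : 0 ≤ 2 - c := by linarith [min_le_left τ (1 - τ), hc_def]
  have lower : ENNReal.ofReal c * risk D (abstainLoss (2 ^ d) α) (fun x => predBEP d B τ (f x)) +
      ENNReal.ofReal (2 - c) * optimalRisk D (abstainLoss (2 ^ d) α) ≤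
        risk D (psiBEPa d B α) f :=
    mul_risk_add_mul_optimalRisk_le_risk (abstainLoss_nonneg hα0) .of_discrete hc.le
      ((measurable_residualWeight τ).comp hf) (fun x => residualWeight_mem_Icc hτ1.le (f x))
      ((measurable_predBEP B).comp hf) ((measurable_castSucc_signDecoding B).comp hf)
      measurable_const fun x y => share_add_residual_le_psiBEPa B hα0 (by linarith) y (f x)
  have upper : optimalRisk D (psiBEPa d B α) ≤
      (ENNReal.ofReal c + ENNReal.ofReal (2 - c)) * optimalRisk D (abstainLoss (2 ^ d) α) := by
    rw [← ENNReal.ofReal_add hc.le hc2, add_sub_cancel]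
    exact optimalRisk_le_mul_optimalRisk two_pos .of_discrete (psiBEPa_scoreBEP_le B hα0 hα1)
  exact tsub_le_tsub_div_of_mul_add_mul_le (ENNReal.ofReal_pos.2 hc).ne' ENNReal.ofReal_ne_top
    ENNReal.ofReal_ne_top lower upper

theorem psiBEPa_excess_risk_bound (d : ℕ) (hd : 1 ≤ d)
    (B : Fin (2 ^ d) ≃ (Fin d → Bool))
    (α : ℝ) (hα0 : 0 ≤ α) (hα1 : α ≤ 1 / 2)
    (τ : ℝ) (hτ0 : 0 < τ) (hτ1 : τ < 1)
    {X : Type*} [MeasurableSpace X] (D : Measure (X × Fin (2 ^ d)))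
    [IsProbabilityMeasure D]
    (f : X → Fin d → ℝ) (hf : Measurable f) :
    (∫⁻ z, ENNReal.ofReal (abstainLoss (2 ^ d) α z.2 (predBEP d B τ (f z.1))) ∂D) -
      (⨅ h : {h : X → Fin (2 ^ d + 1) // Measurable h},
        ∫⁻ z, ENNReal.ofReal (abstainLoss (2 ^ d) α z.2 (h.1 z.1)) ∂D) ≤
    ((∫⁻ z, ENNReal.ofReal (psiBEPa d B α z.2 (f z.1)) ∂D) -
      (⨅ f' : {f' : X → Fin d → ℝ // Measurable f'},
        ∫⁻ z, ENNReal.ofReal (psiBEPa d B α z.2 (f'.1 z.1)) ∂D)) /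
      ENNReal.ofReal (2 * min τ (1 - τ)) :=
  psiBEPa_excess_risk_bound_general hd B hα0 hα1 hτ0 hτ1 D hf
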